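/- Let β⁰ ∈ ℂ^p be s₀-sparse, let y = Xβ⁰ + ε, and let δ ∈ (0,1). Suppose X/√n satisfies the restricted isometry property of order t := (36·(1+δ)/(1−δ) + 1)·s₀ with constant δ_t < δ, and suppose max_{1≤j≤p} (2/n)|⟨ε, X_j⟩| ≤ λ₀ with λ₀ = (σ√K/√n)(2 + √(10 log p)). Let β̂ be the complex LASSO estimator with regularization parameter λ = 2λ₀, and assume p ≥ 3. Then ‖β̂ − β⁰‖₂ ≤ C_δ^σ · √K · √(s₀ log p)/√n, where C_δ^σ = √640 · σ/(1 − δ_t). -/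

import Mathlib

open Matrix Finset

/-- The number of nonzero entries of a vector. -/
noncomputable def sparseCount {p : ℕ} (v : Fin p → ℂ) : ℕ :=
  (Finset.univ.filter fun i => v i ≠ 0).card

/-- Squared `ℓ₂` norm of a complex vector. -/
noncomputable def l2sq {m : ℕ} (v : Fin m → ℂ) : ℝ := ∑ i, ‖v i‖ ^ 2

/-- `ℓ₁` norm of a complex vector. -/
noncomputable def l1 {m : ℕ} (v : Fin m → ℂ) : ℝ := ∑ i, ‖v i‖

/-- `A` satisfies the restricted isometry property of (real) order `s` with constant `d`. -/
def RIP {n p : ℕ} (A : Matrix (Fin n) (Fin p) ℂ) (s : ℝ) (d : ℝ) : Prop :=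
  ∀ β : Fin p → ℂ, (sparseCount β : ℝ) ≤ s →
    (1 - d) * l2sq β ≤ l2sq (A.mulVec β) ∧ l2sq (A.mulVec β) ≤ (1 + d) * l2sq β

/-- `b` is a complex LASSO estimator for data `y`, design `X` and parameter `lam`. -/
def IsLasso {n p : ℕ} (X : Matrix (Fin n) (Fin p) ℂ) (y : Fin n → ℂ) (lam : ℝ)
    (b : Fin p → ℂ) : Prop :=
  ∀ z : Fin p → ℂ,
    1 / (2 * n) * l2sq (X.mulVec b - y) + lam * l1 b ≤
      1 / (2 * n) * l2sq (X.mulVec z - y) + lam * l1 z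

/-! Optimality of `b` gives both the basic inequality for `h = b - β`, which confines `h` to a cone
around the support `S` of `β`, and the stationarity condition on the support of `b`. On the cone,
cutting `h` off `S` into blocks of decreasing magnitude turns the restricted isometry property into
a lower bound on `‖f h‖`, hence a bound on the prediction error. Stationarity and the upper isometry
bound convert the prediction error into a bound on the number of nonzero entries of `b`. So `h` is
sparse, and the lower isometry bound applied to `h` itself upgrades the basic inequality to a bound
on `‖h‖`. -/

section SparseRegression

open scoped InnerProductSpace

variable {𝕜 ι E : Type*} [RCLike 𝕜]

section CoordProj

variable [DecidableEq ι] {T U : Finset ι} {v : EuclideanSpace 𝕜 ι} {a : ℝ}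

/-- The vector `v_T` that agrees with `v` on `T` and vanishes off `T`. -/
def coordProj (T : Finset ι) (v : EuclideanSpace 𝕜 ι) : EuclideanSpace 𝕜 ι :=
  WithLp.toLp 2 fun i => if i ∈ T then v i else 0

lemma coordProj_apply (T : Finset ι) (v : EuclideanSpace 𝕜 ι) (i : ι) :
    coordProj T v i = if i ∈ T then v i else 0 := rfl

lemma coordProj_apply_of_notMem {i : ι} (hi : i ∉ T) : coordProj T v i = 0 := if_neg hi

lemma coordProj_add_coordProj_sdiff (hTU : T ⊆ U) (v : EuclideanSpace 𝕜 ι) :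
    coordProj T v + coordProj (U \ T) v = coordProj U v := by
  ext i
  by_cases hT : i ∈ T
  · simp [coordProj_apply, hT, hTU hT]
  · simp [coordProj_apply, hT]

variable [Fintype ι]

lemma norm_coordProj_sq (T : Finset ι) (v : EuclideanSpace 𝕜 ι) :
    ‖coordProj T v‖ ^ 2 = ∑ i ∈ T, ‖v i‖ ^ 2 := by
  simp [EuclideanSpace.norm_sq_eq, coordProj_apply, apply_ite, Finset.sum_ite_mem]

lemma norm_coordProj_mono (hTU : T ⊆ U) : ‖coordProj T v‖ ≤ ‖coordProj U v‖ := by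
  rw [← sq_le_sq₀ (norm_nonneg _) (norm_nonneg _), norm_coordProj_sq, norm_coordProj_sq]
  exact sum_le_sum_of_subset_of_nonneg hTU fun _ _ _ => sq_nonneg _

lemma norm_coordProj_le (T : Finset ι) (v : EuclideanSpace 𝕜 ι) : ‖coordProj T v‖ ≤ ‖v‖ := by
  rw [← sq_le_sq₀ (norm_nonneg _) (norm_nonneg _), norm_coordProj_sq, EuclideanSpace.norm_sq_eq]
  exact sum_le_sum_of_subset_of_nonneg (subset_univ T) fun _ _ _ => sq_nonneg _

lemma norm_coordProj_le_sqrt_card_mul (ha : 0 ≤ a) (hv : ∀ i ∈ T, ‖v i‖ ≤ a) :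
    ‖coordProj T v‖ ≤ √(#T) * a := by
  rw [← sq_le_sq₀ (norm_nonneg _) (by positivity), norm_coordProj_sq, mul_pow,
    Real.sq_sqrt (Nat.cast_nonneg _), ← nsmul_eq_mul]
  exact sum_le_card_nsmul T _ _ fun i hi => pow_le_pow_left₀ (norm_nonneg _) (hv i hi) 2

lemma sqrt_card_mul_le_norm_coordProj (ha : 0 ≤ a) (hv : ∀ i ∈ T, a ≤ ‖v i‖) :
    √(#T) * a ≤ ‖coordProj T v‖ := by
  rw [← sq_le_sq₀ (by positivity) (norm_nonneg _), norm_coordProj_sq, mul_pow,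
    Real.sq_sqrt (Nat.cast_nonneg _), ← nsmul_eq_mul]
  exact card_nsmul_le_sum T _ _ fun i hi => pow_le_pow_left₀ ha (hv i hi) 2

lemma sum_norm_le_sqrt_card_mul_norm_coordProj (T : Finset ι) (v : EuclideanSpace 𝕜 ι) :
    ∑ i ∈ T, ‖v i‖ ≤ √(#T) * ‖coordProj T v‖ := by
  rw [← sq_le_sq₀ (sum_nonneg fun _ _ => norm_nonneg _) (by positivity), mul_pow,
    Real.sq_sqrt (Nat.cast_nonneg _), norm_coordProj_sq]
  exact sq_sum_le_card_mul_sum_sq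

lemma inner_coordProj_self (T : Finset ι) (v : EuclideanSpace 𝕜 ι) :
    ⟪coordProj T v, v⟫_𝕜 = (‖coordProj T v‖ : 𝕜) ^ 2 := by
  rw [← inner_self_eq_norm_sq_to_K, PiLp.inner_apply, PiLp.inner_apply]
  refine sum_congr rfl fun i _ => ?_
  by_cases hi : i ∈ T <;> simp [coordProj_apply, hi]

end CoordProj

lemma exists_subset_card_eq_forall_le {α β : Type*} [LinearOrder β] [DecidableEq α] (g : α → β)
    {W : Finset α} {m : ℕ} (hm : m ≤ #W) :
    ∃ T ⊆ W, #T = m ∧ ∀ i ∈ T, ∀ j ∈ W \ T, g j ≤ g i := by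
  induction m with
  | zero => exact ⟨∅, by simp⟩
  | succ m ih =>
    obtain ⟨T, hTW, hT, htop⟩ := ih (by omega)
    obtain ⟨k, hk, hmax⟩ := exists_max_image (W \ T) g <| by
      rw [← card_pos, card_sdiff_of_subset hTW]
      omega
    obtain ⟨hkW, hkT⟩ := mem_sdiff.1 hk
    refine ⟨insert k T, insert_subset hkW hTW, by rw [card_insert_of_notMem hkT, hT], ?_⟩
    intro i hi j hj
    have hj' : j ∈ W \ T := sdiff_subset_sdiff Subset.rfl (subset_insert k T) hj
    rcases mem_insert.1 hi with rfl | hi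
    · exact hmax j hj'
    · exact htop i hi j hj'

section NormedSpace

variable [Fintype ι] [NormedAddCommGroup E] [NormedSpace 𝕜 E]

/-- Two-sided norm bounds for `f` on `t`-sparse vectors, a vector being `t`-sparse when it vanishes
off a set of at most `t` coordinates. The restricted isometry property with constant `d` is the
case `κ = √(1 - d)`, `L = √(1 + d)`. -/
def SparseBounds (f : EuclideanSpace 𝕜 ι →ₗ[𝕜] E) (t κ L : ℝ) : Prop :=
  ∀ (T : Finset ι) (v : EuclideanSpace 𝕜 ι), #T ≤ t → (∀ i ∉ T, v i = 0) →
    κ * ‖v‖ ≤ ‖f v‖ ∧ ‖f v‖ ≤ L * ‖v‖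

variable {f : EuclideanSpace 𝕜 ι →ₗ[𝕜] E} {t κ L : ℝ}

lemma SparseBounds.le (hf : SparseBounds f t κ L) (ht : 1 ≤ t) [Nonempty ι] : κ ≤ L := by
  classical
  obtain ⟨i⟩ := ‹Nonempty ι›
  have h := hf {i} (EuclideanSpace.single i 1) (by simpa using ht) fun j hj => by
    simpa using hj
  simpa using h.1.trans h.2

variable [DecidableEq ι]

-- Peel off the `M` largest coordinates `T` of `v_W`. Every later coordinate is at most the average
-- of `‖v i‖` over `T`, so the next block has `ℓ₂` norm at most `(∑ i ∈ T, ‖v i‖) / √M`; the bounds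
-- for the successive blocks add up to the `ℓ₁` norm.
lemma exists_subset_norm_map_coordProj_sdiff_le {M : ℕ} (hM : 0 < M) (hL : 0 ≤ L)
    (v : EuclideanSpace 𝕜 ι)
    (hf : ∀ T : Finset ι, #T ≤ M → ‖f (coordProj T v)‖ ≤ L * ‖coordProj T v‖) (W : Finset ι) :
    ∃ T ⊆ W, #T ≤ M ∧ ‖f (coordProj (W \ T) v)‖ ≤ L * ((∑ i ∈ W, ‖v i‖) / √M) := by
  induction W using Finset.strongInduction with
  | H W ih =>
  rcases le_or_gt #W M with hW | hW
  · refine ⟨W, Subset.rfl, hW, ?_⟩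
    have hzero : coordProj (W \ W) v = 0 := by ext i; simp [coordProj_apply]
    rw [hzero, map_zero, norm_zero]
    positivity
  obtain ⟨T, hTW, hT, htop⟩ := exists_subset_card_eq_forall_le (fun i => ‖v i‖) hW.le
  have hTne : T.Nonempty := card_pos.1 (hT ▸ hM)
  obtain ⟨k, hk, hmin⟩ := exists_min_image T (fun i => ‖v i‖) hTne
  obtain ⟨T', hT'W, hT', htail⟩ := ih (W \ T) (sdiff_ssubset hTW hTne)
  refine ⟨T, hTW, hT.le, ?_⟩
  have hsqrtM : 0 < √(M : ℝ) := Real.sqrt_pos.2 (Nat.cast_pos.2 hM)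
  have hmean : √M * ‖v k‖ ≤ (∑ i ∈ T, ‖v i‖) / √M := by
    rw [le_div_iff₀ hsqrtM, mul_right_comm, Real.mul_self_sqrt (Nat.cast_nonneg _), ← hT,
      ← nsmul_eq_mul]
    exact card_nsmul_le_sum T _ _ hmin
  have hblock : ‖coordProj T' v‖ ≤ (∑ i ∈ T, ‖v i‖) / √M :=
    calc ‖coordProj T' v‖ ≤ √(#T') * ‖v k‖ :=
          norm_coordProj_le_sqrt_card_mul (norm_nonneg _) fun j hj => htop k hk j (hT'W hj)
      _ ≤ √M * ‖v k‖ := by gcongr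
      _ ≤ _ := hmean
  calc ‖f (coordProj (W \ T) v)‖
      = ‖f (coordProj T' v) + f (coordProj ((W \ T) \ T') v)‖ := by
        rw [← map_add, coordProj_add_coordProj_sdiff hT'W]
    _ ≤ ‖f (coordProj T' v)‖ + ‖f (coordProj ((W \ T) \ T') v)‖ := norm_add_le _ _
    _ ≤ L * ((∑ i ∈ T, ‖v i‖) / √M) + L * ((∑ i ∈ W \ T, ‖v i‖) / √M) :=
        add_le_add ((hf T' hT').trans (by gcongr)) htail
    _ = L * ((∑ i ∈ W, ‖v i‖) / √M) := by
        rw [← sum_sdiff hTW]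
        ring

lemma SparseBounds.restricted_eigenvalue (hf : SparseBounds f t κ L) (hκ : 0 ≤ κ) (hL : 0 ≤ L)
    {S : Finset ι} {M : ℕ} (hM : 0 < M) (ht : #S + M ≤ t) {c : ℝ} (hc : 0 ≤ c)
    (hcond : L * c * √(#S) ≤ κ / 2 * √M) {v : EuclideanSpace 𝕜 ι}
    (hcone : ∑ i ∈ Sᶜ, ‖v i‖ ≤ c * ∑ i ∈ S, ‖v i‖) :
    κ / 2 * ‖coordProj S v‖ ≤ ‖f v‖ := by
  have hsqrtM : 0 < √(M : ℝ) := Real.sqrt_pos.2 (Nat.cast_pos.2 hM)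
  obtain ⟨T, -, hT, htail⟩ := exists_subset_norm_map_coordProj_sdiff_le hM hL v
    (fun T hT => (hf T _ ((Nat.cast_le.2 hT).trans (by linarith [Nat.cast_nonneg (α := ℝ) #S]))
      fun _ => coordProj_apply_of_notMem).2) Sᶜ
  have hsplit : coordProj (S ∪ T) v + coordProj (Sᶜ \ T) v = v := by
    ext i
    by_cases hS : i ∈ S <;> by_cases hT : i ∈ T <;> simp [coordProj_apply, hS, hT]
  have hcard : (#(S ∪ T) : ℝ) ≤ t :=
    le_trans (by exact_mod_cast (card_union_le S T).trans (by omega)) ht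
  have htail' : ‖f (coordProj (Sᶜ \ T) v)‖ ≤ κ / 2 * ‖coordProj S v‖ :=
    calc ‖f (coordProj (Sᶜ \ T) v)‖ ≤ L * ((∑ i ∈ Sᶜ, ‖v i‖) / √M) := htail
      _ ≤ L * (c * (√(#S) * ‖coordProj S v‖) / √M) := by
          gcongr
          exact hcone.trans (by gcongr; exact sum_norm_le_sqrt_card_mul_norm_coordProj S v)
      _ = L * c * √(#S) / √M * ‖coordProj S v‖ := by ring
      _ ≤ κ / 2 * ‖coordProj S v‖ :=
          mul_le_mul_of_nonneg_right ((div_le_iff₀ hsqrtM).2 hcond) (norm_nonneg _)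
  have hhead : κ * ‖coordProj S v‖ ≤ ‖f (coordProj (S ∪ T) v)‖ :=
    (mul_le_mul_of_nonneg_left (norm_coordProj_mono subset_union_left) hκ).trans
      (hf _ _ hcard fun _ => coordProj_apply_of_notMem).1
  have htriangle : ‖f (coordProj (S ∪ T) v)‖ ≤ ‖f v‖ + ‖f (coordProj (Sᶜ \ T) v)‖ := by
    rw [eq_sub_of_add_eq hsplit, map_sub]
    exact norm_sub_le _ _
  linarith

end NormedSpace

section InnerProductSpace

variable [NormedAddCommGroup E] [InnerProductSpace 𝕜 E]

section Correlation

variable [DecidableEq ι]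

/-- The vector `f* x` of inner products of `x` with the columns of `f`. Defining it by coordinates
gives the adjoint without completeness of `E`. -/
def correlation (f : EuclideanSpace 𝕜 ι →ₗ[𝕜] E) (x : E) : EuclideanSpace 𝕜 ι :=
  WithLp.toLp 2 fun j => ⟪f (EuclideanSpace.single j 1), x⟫_𝕜

lemma correlation_apply (f : EuclideanSpace 𝕜 ι →ₗ[𝕜] E) (x : E) (j : ι) :
    correlation f x j = ⟪f (EuclideanSpace.single j 1), x⟫_𝕜 := rfl

lemma correlation_sub (f : EuclideanSpace 𝕜 ι →ₗ[𝕜] E) (x y : E) :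
    correlation f (x - y) = correlation f x - correlation f y := by
  ext j
  simp [correlation_apply, inner_sub_right]

variable [Fintype ι] {f : EuclideanSpace 𝕜 ι →ₗ[𝕜] E} {t κ L μ : ℝ} {x : E}

lemma inner_map_eq_inner_correlation (f : EuclideanSpace 𝕜 ι →ₗ[𝕜] E) (w : EuclideanSpace 𝕜 ι)
    (x : E) : ⟪f w, x⟫_𝕜 = ⟪w, correlation f x⟫_𝕜 := by
  have hw : w = ∑ j, w j • EuclideanSpace.single j (1 : 𝕜) := by
    simpa using ((EuclideanSpace.basisFun ι 𝕜).sum_repr w).symm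
  conv_lhs => rw [hw]
  simp only [map_sum, map_smul, sum_inner, inner_smul_left, PiLp.inner_apply, correlation_apply,
    RCLike.inner_apply']

lemma norm_inner_map_le (hx : ∀ j, ‖correlation f x j‖ ≤ μ) (w : EuclideanSpace 𝕜 ι) :
    ‖⟪f w, x⟫_𝕜‖ ≤ μ * ∑ j, ‖w j‖ := by
  rw [inner_map_eq_inner_correlation, PiLp.inner_apply, mul_sum]
  refine norm_sum_le_of_le _ fun j _ => ?_
  calc ‖⟪w j, correlation f x j⟫_𝕜‖ ≤ ‖w j‖ * ‖correlation f x j‖ := norm_inner_le_norm _ _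
    _ ≤ μ * ‖w j‖ := by
      rw [mul_comm]
      gcongr
      exact hx j

lemma SparseBounds.norm_coordProj_correlation_le (hf : SparseBounds f t κ L) (hL : 0 ≤ L)
    {U : Finset ι} (hU : #U ≤ t) (x : E) : ‖coordProj U (correlation f x)‖ ≤ L * ‖x‖ := by
  set w := coordProj U (correlation f x)
  rcases (norm_nonneg w).eq_or_lt with hzero | hpos
  · rw [← hzero]
    positivity
  have hinner : ‖⟪f w, x⟫_𝕜‖ = ‖w‖ ^ 2 := by
    rw [inner_map_eq_inner_correlation, inner_coordProj_self, norm_pow, norm_algebraMap',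
      norm_norm]
  refine le_of_mul_le_mul_left ?_ hpos
  calc ‖w‖ * ‖w‖ = ‖⟪f w, x⟫_𝕜‖ := by rw [hinner, sq]
    _ ≤ ‖f w‖ * ‖x‖ := norm_inner_le_norm _ _
    _ ≤ L * ‖w‖ * ‖x‖ := by
      gcongr
      exact (hf U w hU fun _ => coordProj_apply_of_notMem).2
    _ = ‖w‖ * (L * ‖x‖) := by ring

end Correlation

variable [Fintype ι]

/-- `b` minimizes `z ↦ ½‖f z - y‖² + λ‖z‖₁`. The factor `1 / n` of the LASSO objective is absorbed
into the normalization of `f` and `y`. -/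
def IsLassoMinimizer (f : EuclideanSpace 𝕜 ι →ₗ[𝕜] E) (y : E) (lam : ℝ)
    (b : EuclideanSpace 𝕜 ι) : Prop :=
  ∀ z : EuclideanSpace 𝕜 ι, 1 / 2 * ‖f b - y‖ ^ 2 + lam * ∑ i, ‖b i‖ ≤
    1 / 2 * ‖f z - y‖ ^ 2 + lam * ∑ i, ‖z i‖

variable {f : EuclideanSpace 𝕜 ι →ₗ[𝕜] E} {t κ L lam μ : ℝ} {y e : E}
  {b β : EuclideanSpace 𝕜 ι} {S : Finset ι}

lemma sum_norm_add_smul_le (b d : EuclideanSpace 𝕜 ι) {u : ℝ} (hu : u ∈ Set.Icc (0 : ℝ) 1) :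
    ∑ i, ‖(b + (u : 𝕜) • d) i‖ ≤ (1 - u) * ∑ i, ‖b i‖ + u * ∑ i, ‖(b + d) i‖ := by
  rw [mul_sum, mul_sum, ← sum_add_distrib]
  refine sum_le_sum fun i _ => ?_
  have hconvex : (b + (u : 𝕜) • d) i = ((1 - u : ℝ) : 𝕜) * b i + (u : 𝕜) * (b + d) i := by
    simp only [PiLp.add_apply, PiLp.smul_apply, smul_eq_mul]
    push_cast
    ring
  rw [hconvex]
  refine (norm_add_le _ _).trans_eq ?_
  rw [norm_mul, norm_mul, RCLike.norm_of_nonneg hu.1,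
    RCLike.norm_of_nonneg (sub_nonneg.2 hu.2)]

lemma nonneg_of_forall_nonneg_add_mul {A B : ℝ} (h : ∀ u ∈ Set.Ioc (0 : ℝ) 1, 0 ≤ A + u * B) :
    0 ≤ A := by
  have hlim : Filter.Tendsto (fun u => A + u * B) (nhdsWithin 0 (Set.Ioi 0)) (nhds A) :=
    (Continuous.tendsto' (by fun_prop) 0 A (by simp)).mono_left nhdsWithin_le_nhds
  refine ge_of_tendsto hlim ?_
  filter_upwards [Ioc_mem_nhdsGT one_pos] with u hu using h u hu

-- The directional derivative of the objective at a minimizer is nonnegative: the quadratic term is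
-- expanded along `b + u • d`, the penalty is bounded by convexity, and `u → 0`.
lemma IsLassoMinimizer.re_inner_add_nonneg (hb : IsLassoMinimizer f y lam b) (hlam : 0 ≤ lam)
    (d : EuclideanSpace 𝕜 ι) :
    0 ≤ RCLike.re ⟪f d, f b - y⟫_𝕜 + lam * (∑ i, ‖(b + d) i‖ - ∑ i, ‖b i‖) := by
  refine nonneg_of_forall_nonneg_add_mul (B := ‖f d‖ ^ 2 / 2) fun u hu => ?_
  refine nonneg_of_mul_nonneg_right (a := u) ?_ hu.1
  have hquad : ‖f (b + (u : 𝕜) • d) - y‖ ^ 2 =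
      ‖f b - y‖ ^ 2 + 2 * (u * RCLike.re ⟪f d, f b - y⟫_𝕜) + u ^ 2 * ‖f d‖ ^ 2 := by
    have hmap : f (b + (u : 𝕜) • d) - y = (u : 𝕜) • f d + (f b - y) := by
      rw [map_add, map_smul]
      abel
    rw [hmap, norm_add_sq (𝕜 := 𝕜), inner_smul_left, norm_smul, RCLike.norm_of_nonneg hu.1.le,
      RCLike.conj_ofReal, RCLike.re_ofReal_mul]
    ring
  have hpen := mul_le_mul_of_nonneg_left (sum_norm_add_smul_le b d ⟨hu.1.le, hu.2⟩) hlam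
  have hmin := hb (b + (u : 𝕜) • d)
  rw [hquad] at hmin
  linarith

lemma IsLassoMinimizer.le_norm_correlation [DecidableEq ι] (hb : IsLassoMinimizer f y lam b)
    (hlam : 0 ≤ lam) {j : ι} (hj : b j ≠ 0) : lam ≤ ‖correlation f (f b - y) j‖ := by
  have hnonneg := hb.re_inner_add_nonneg hlam (-(b j) • EuclideanSpace.single j 1)
  have hpen : ∑ i, ‖(b + -(b j) • EuclideanSpace.single j (1 : 𝕜)) i‖ - ∑ i, ‖b i‖ = -‖b j‖ := by
    rw [← sum_sub_distrib, sum_eq_single_of_mem j (mem_univ j)]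
    · simp
    · intro i _ hij
      simp [hij]
  rw [hpen, map_smul, inner_smul_left, ← correlation_apply] at hnonneg
  have hre := RCLike.re_le_norm ((starRingEnd 𝕜) (-(b j)) * correlation f (f b - y) j)
  rw [norm_mul, RCLike.norm_conj, norm_neg] at hre
  refine le_of_mul_le_mul_left ?_ (norm_pos_iff.2 hj)
  linarith

lemma sum_norm_sub_sum_norm_le [DecidableEq ι] (hS : ∀ i ∉ S, β i = 0)
    (b : EuclideanSpace 𝕜 ι) :
    ∑ i, ‖β i‖ - ∑ i, ‖b i‖ ≤ ∑ i ∈ S, ‖(b - β) i‖ - ∑ i ∈ Sᶜ, ‖(b - β) i‖ := by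
  have hon : ∑ i ∈ S, ‖β i‖ - ∑ i ∈ S, ‖b i‖ ≤ ∑ i ∈ S, ‖(b - β) i‖ := by
    rw [← sum_sub_distrib]
    refine sum_le_sum fun i _ => ?_
    rw [PiLp.sub_apply, norm_sub_rev]
    exact norm_sub_norm_le _ _
  have hoff : ∑ i ∈ Sᶜ, ‖β i‖ - ∑ i ∈ Sᶜ, ‖b i‖ = -∑ i ∈ Sᶜ, ‖(b - β) i‖ := by
    rw [← sum_sub_distrib, ← sum_neg_distrib]
    exact sum_congr rfl fun i hi => by simp [hS i (mem_compl.1 hi)]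
  rw [← sum_add_sum_compl S, ← sum_add_sum_compl S fun i => ‖b i‖]
  linarith

lemma IsLassoMinimizer.norm_map_sub_sq_le [DecidableEq ι]
    (hb : IsLassoMinimizer f (f β + e) lam b) (hlam : 0 ≤ lam) (hS : ∀ i ∉ S, β i = 0)
    (he : ∀ j, ‖correlation f e j‖ ≤ μ) :
    ‖f (b - β)‖ ^ 2 ≤
      (lam + μ) * ∑ i ∈ S, ‖(b - β) i‖ - (lam - μ) * ∑ i ∈ Sᶜ, ‖(b - β) i‖ := by
  have hnonneg := hb.re_inner_add_nonneg hlam (-(b - β))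
  have hinner : RCLike.re ⟪f (-(b - β)), f b - (f β + e)⟫_𝕜 =
      RCLike.re ⟪f (b - β), e⟫_𝕜 - ‖f (b - β)‖ ^ 2 := by
    rw [← sub_sub, ← map_sub, map_neg, inner_neg_left, inner_sub_right, map_neg, map_sub,
      inner_self_eq_norm_sq]
    ring
  rw [hinner, neg_sub, add_sub_cancel] at hnonneg
  have hnoise : RCLike.re ⟪f (b - β), e⟫_𝕜 ≤ μ * ∑ i, ‖(b - β) i‖ :=
    (RCLike.re_le_norm _).trans (norm_inner_map_le he _)
  rw [← sum_add_sum_compl S] at hnoise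
  have hpen := mul_le_mul_of_nonneg_left (sum_norm_sub_sum_norm_le hS b) hlam
  linarith

section NoiseLevel

variable [DecidableEq ι]

lemma IsLassoMinimizer.sum_compl_norm_sub_le (hb : IsLassoMinimizer f (f β + e) lam b)
    (hlam : 0 < lam) (hS : ∀ i ∉ S, β i = 0) (he : ∀ j, ‖correlation f e j‖ ≤ lam / 4) :
    ∑ i ∈ Sᶜ, ‖(b - β) i‖ ≤ 5 / 3 * ∑ i ∈ S, ‖(b - β) i‖ := by
  have hbasic := hb.norm_map_sub_sq_le hlam.le hS he
  refine le_of_mul_le_mul_left ?_ hlam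
  linarith [sq_nonneg ‖f (b - β)‖]

lemma IsLassoMinimizer.norm_map_sub_sq_le_norm_coordProj
    (hb : IsLassoMinimizer f (f β + e) lam b) (hlam : 0 ≤ lam) (hS : ∀ i ∉ S, β i = 0)
    (he : ∀ j, ‖correlation f e j‖ ≤ lam / 4) :
    ‖f (b - β)‖ ^ 2 ≤ 5 / 4 * lam * √(#S) * ‖coordProj S (b - β)‖ := by
  have hbasic := hb.norm_map_sub_sq_le hlam hS he
  have hoff : 0 ≤ lam * ∑ i ∈ Sᶜ, ‖(b - β) i‖ := by positivity
  have hon := mul_le_mul_of_nonneg_left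
    (sum_norm_le_sqrt_card_mul_norm_coordProj S (b - β)) hlam
  linarith

lemma IsLassoMinimizer.mul_norm_map_sub_le (hb : IsLassoMinimizer f (f β + e) lam b)
    (hlam : 0 < lam) (hS : ∀ i ∉ S, β i = 0) (he : ∀ j, ‖correlation f e j‖ ≤ lam / 4)
    (hf : SparseBounds f t κ L) (hκ : 0 < κ) (hL : 0 ≤ L)
    (ht : 100 / 9 * (L / κ) ^ 2 * #S + #S + 1 ≤ t) :
    κ * ‖f (b - β)‖ ≤ 5 / 2 * lam * √(#S) := by
  set R := 100 / 9 * (L / κ) ^ 2 * #S with hR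
  have hfloor : (⌊R⌋₊ : ℝ) ≤ R := Nat.floor_le (by positivity)
  have hcond : L * (5 / 3) * √(#S) ≤ κ / 2 * √(⌊R⌋₊ + 1 : ℕ) := by
    have hRM : κ ^ 2 / 4 * R ≤ κ ^ 2 / 4 * (⌊R⌋₊ + 1 : ℕ) := by
      gcongr
      exact_mod_cast (Nat.lt_floor_add_one R).le
    rw [← sq_le_sq₀ (by positivity) (by positivity), mul_pow, mul_pow, mul_pow,
      Real.sq_sqrt (Nat.cast_nonneg _), Real.sq_sqrt (Nat.cast_nonneg _)]
    calc L ^ 2 * (5 / 3) ^ 2 * #S = κ ^ 2 / 4 * R := by rw [hR]; field_simp; ring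
      _ ≤ κ ^ 2 / 4 * (⌊R⌋₊ + 1 : ℕ) := hRM
      _ = (κ / 2) ^ 2 * (⌊R⌋₊ + 1 : ℕ) := by ring
  have heigen := hf.restricted_eigenvalue hκ.le hL (Nat.succ_pos ⌊R⌋₊)
    (by push_cast; linarith) (by norm_num) hcond (hb.sum_compl_norm_sub_le hlam hS he)
  have hquad := hb.norm_map_sub_sq_le_norm_coordProj hlam.le hS he
  rcases (norm_nonneg (f (b - β))).eq_or_lt with hzero | hpos
  · rw [← hzero, mul_zero]
    positivity
  refine le_of_mul_le_mul_left ?_ hpos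
  calc ‖f (b - β)‖ * (κ * ‖f (b - β)‖) = κ * ‖f (b - β)‖ ^ 2 := by ring
    _ ≤ κ * (5 / 4 * lam * √(#S) * ‖coordProj S (b - β)‖) := by gcongr
    _ = κ / 2 * ‖coordProj S (b - β)‖ * (5 / 2 * lam * √(#S)) := by ring
    _ ≤ ‖f (b - β)‖ * (5 / 2 * lam * √(#S)) := by gcongr

-- On the support of `b` the residual correlates with every column at level `lam`, and noise
-- accounts for at most a quarter of that.
lemma IsLassoMinimizer.card_le_of_forall_ne_zero (hb : IsLassoMinimizer f (f β + e) lam b)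
    (hlam : 0 < lam) (he : ∀ j, ‖correlation f e j‖ ≤ lam / 4)
    (hf : SparseBounds f t κ L) (hκ : 0 < κ) (hL : 0 ≤ L) {s : ℝ} (hs : 0 ≤ s)
    (hpred : κ * ‖f (b - β)‖ ≤ 5 / 2 * lam * √s) {U : Finset ι} (hUt : #U ≤ t)
    (hU : ∀ j ∈ U, b j ≠ 0) :
    #U ≤ 100 / 9 * (L / κ) ^ 2 * s := by
  have hcorr : ∀ j ∈ U, 3 / 4 * lam ≤ ‖correlation f (f (b - β)) j‖ := by
    intro j hj
    have hkkt := hb.le_norm_correlation hlam.le (hU j hj)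
    rw [← sub_sub, ← map_sub, correlation_sub] at hkkt
    have htri := norm_sub_le (correlation f (f (b - β)) j) (correlation f e j)
    rw [PiLp.sub_apply] at hkkt
    linarith [he j]
  have hle : √(#U) * (3 / 4 * lam) ≤ L * ‖f (b - β)‖ :=
    (sqrt_card_mul_le_norm_coordProj (by positivity) hcorr).trans
      (hf.norm_coordProj_correlation_le hL hUt _)
  have hsqrt : √(#U) ≤ 10 / 3 * (L / κ) * √s := by
    refine le_of_mul_le_mul_right ?_ (by positivity : 0 < 3 / 4 * lam)
    calc √(#U) * (3 / 4 * lam) ≤ L * ‖f (b - β)‖ := hle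
      _ = L / κ * (κ * ‖f (b - β)‖) := by field_simp
      _ ≤ L / κ * (5 / 2 * lam * √s) := by gcongr
      _ = 10 / 3 * (L / κ) * √s * (3 / 4 * lam) := by ring
  calc (#U : ℝ) ≤ (10 / 3 * (L / κ) * √s) ^ 2 := (Real.sqrt_le_left (by positivity)).1 hsqrt
    _ = 100 / 9 * (L / κ) ^ 2 * s := by
      rw [mul_pow, Real.sq_sqrt hs]
      ring

lemma IsLassoMinimizer.exists_card_le_forall_eq_zero
    (hb : IsLassoMinimizer f (f β + e) lam b) (hlam : 0 < lam)
    (he : ∀ j, ‖correlation f e j‖ ≤ lam / 4) (hf : SparseBounds f t κ L) (hκ : 0 < κ)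
    (hL : 0 ≤ L) {s : ℝ} (hs : 0 ≤ s) (hpred : κ * ‖f (b - β)‖ ≤ 5 / 2 * lam * √s)
    (ht : 100 / 9 * (L / κ) ^ 2 * s + 1 ≤ t) :
    ∃ V : Finset ι, #V ≤ 100 / 9 * (L / κ) ^ 2 * s ∧ ∀ i ∉ V, b i = 0 := by
  classical
  set R := 100 / 9 * (L / κ) ^ 2 * s
  refine ⟨univ.filter fun i => b i ≠ 0, ?_, fun i hi => by simpa using hi⟩
  by_contra! hcard
  obtain ⟨U, hUsub, hU⟩ := exists_subset_card_eq ((Nat.floor_lt (by positivity)).2 hcard)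
  have hUR : (#U : ℝ) = ⌊R⌋₊ + 1 := by exact_mod_cast hU
  have hle : (#U : ℝ) ≤ R := hb.card_le_of_forall_ne_zero hlam he hf hκ hL hs hpred
    (by linarith [Nat.floor_le (by positivity : 0 ≤ R)])
    fun j hj => (mem_filter.1 (hUsub hj)).2
  linarith [Nat.lt_floor_add_one R]

theorem lasso_oracle_l2_general (hf : SparseBounds f t κ L) (hκ : 0 < κ)
    (ht : (13 * (L / κ) ^ 2 + 1) * #S ≤ t) (hS : ∀ i ∉ S, β i = 0) (hlam : 0 < lam)
    (he : ∀ j, ‖correlation f e j‖ ≤ lam / 4) (hb : IsLassoMinimizer f (f β + e) lam b) :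
    ‖b - β‖ ≤ 5 / 4 * lam * √(#S) / κ ^ 2 := by
  rcases S.eq_empty_or_nonempty with rfl | hne
  · have hcone := hb.sum_compl_norm_sub_le hlam hS he
    have hzero : b - β = 0 := by
      ext i
      exact norm_eq_zero.1 <| (sum_eq_zero_iff_of_nonneg fun _ _ => norm_nonneg _).1
        (le_antisymm (by simpa using hcone) (by positivity)) i (by simp)
    rw [hzero, norm_zero]
    positivity
  have hS1 : (1 : ℝ) ≤ #S := by exact_mod_cast hne.card_pos
  have hκL : κ ≤ L := by
    have := hne.to_type
    refine hf.le (le_trans ?_ ht)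
    nlinarith [sq_nonneg (L / κ)]
  have hL : 0 ≤ L := hκ.le.trans hκL
  have hratio : 1 ≤ (L / κ) ^ 2 := one_le_pow₀ ((one_le_div hκ).2 hκL)
  have ht' : 100 / 9 * (L / κ) ^ 2 * #S + #S + 1 ≤ t := by nlinarith
  obtain ⟨V, hVcard, hV⟩ := hb.exists_card_le_forall_eq_zero hlam he hf hκ hL
    (Nat.cast_nonneg _) (hb.mul_norm_map_sub_le hlam hS he hf hκ hL ht') (by linarith)
  have hlower : κ * ‖b - β‖ ≤ ‖f (b - β)‖ := by
    refine (hf (S ∪ V) _ ?_ fun i hi => ?_).1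
    · have hunion : (#(S ∪ V) : ℝ) ≤ #S + #V := by exact_mod_cast card_union_le S V
      linarith
    · rw [notMem_union] at hi
      simp [hS i hi.1, hV i hi.2]
  rcases (norm_nonneg (b - β)).eq_or_lt with hzero | hpos
  · rw [← hzero]
    positivity
  rw [le_div_iff₀ (by positivity)]
  refine le_of_mul_le_mul_left ?_ hpos
  calc ‖b - β‖ * (‖b - β‖ * κ ^ 2) = (κ * ‖b - β‖) ^ 2 := by ring
    _ ≤ ‖f (b - β)‖ ^ 2 := by gcongr
    _ ≤ 5 / 4 * lam * √(#S) * ‖coordProj S (b - β)‖ :=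
        hb.norm_map_sub_sq_le_norm_coordProj hlam.le hS he
    _ ≤ 5 / 4 * lam * √(#S) * ‖b - β‖ := by
        gcongr
        exact norm_coordProj_le S _
    _ = ‖b - β‖ * (5 / 4 * lam * √(#S)) := by ring

end NoiseLevel

end InnerProductSpace

section Matrix

variable {m n p : ℕ} {X : Matrix (Fin n) (Fin p) ℂ}

lemma norm_toLp_sq (v : Fin m → ℂ) : ‖(WithLp.toLp 2 v : EuclideanSpace ℂ (Fin m))‖ ^ 2 = l2sq v :=
  EuclideanSpace.norm_sq_eq _

lemma sqrt_l2sq (v : Fin m → ℂ) : √(l2sq v) = ‖(WithLp.toLp 2 v : EuclideanSpace ℂ (Fin m))‖ := by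
  rw [← norm_toLp_sq, Real.sqrt_sq (norm_nonneg _)]

lemma RIP.sparseBounds {A : Matrix (Fin n) (Fin p) ℂ} {t d d' : ℝ} (hA : RIP A t d)
    (hd : d ≤ d') : SparseBounds (toEuclideanLin A) t √(1 - d) √(1 + d') := by
  intro T v hT hv
  have hsparse : (sparseCount v.ofLp : ℝ) ≤ t := by
    refine le_trans (Nat.cast_le.2 (card_le_card fun i hi => ?_)) hT
    exact by_contra fun hiT => (mem_filter.1 hi).2 (hv i hiT)
  obtain ⟨hlower, hupper⟩ := hA v.ofLp hsparse
  have hnorm : ‖toEuclideanLin A v‖ = √(l2sq (A *ᵥ v.ofLp)) := by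
    rw [sqrt_l2sq, toLpLin_apply]
  have hnonneg : 0 ≤ l2sq v.ofLp := by
    rw [← norm_toLp_sq]
    positivity
  have hv' : ‖v‖ = √(l2sq v.ofLp) := (sqrt_l2sq v.ofLp).symm
  rw [hnorm, hv', ← Real.sqrt_mul' _ hnonneg, ← Real.sqrt_mul' _ hnonneg]
  exact ⟨Real.sqrt_le_sqrt hlower, Real.sqrt_le_sqrt (hupper.trans (by gcongr))⟩

lemma norm_inv_sqrt_natCast_sq (n : ℕ) : ‖((√n : ℝ) : ℂ)⁻¹‖ ^ 2 = 1 / n := by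
  rw [norm_inv, Complex.norm_real, Real.norm_of_nonneg (Real.sqrt_nonneg _), inv_pow,
    Real.sq_sqrt (Nat.cast_nonneg _), one_div]

lemma IsLasso.isLassoMinimizer {y : Fin n → ℂ} {lam : ℝ} {b : Fin p → ℂ}
    (hb : IsLasso X y lam b) :
    IsLassoMinimizer (toEuclideanLin (((√n : ℝ) : ℂ)⁻¹ • X))
      (((√n : ℝ) : ℂ)⁻¹ • WithLp.toLp 2 y) lam (WithLp.toLp 2 b) := by
  have hfit (z : Fin p → ℂ) :
      1 / 2 * ‖toEuclideanLin (((√n : ℝ) : ℂ)⁻¹ • X) (WithLp.toLp 2 z) -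
        ((√n : ℝ) : ℂ)⁻¹ • WithLp.toLp 2 y‖ ^ 2 = 1 / (2 * n) * l2sq (X *ᵥ z - y) := by
    rw [map_smul, LinearMap.smul_apply, toLpLin_toLp, toLin'_apply, ← smul_sub,
      ← WithLp.toLp_sub, norm_smul, mul_pow, norm_inv_sqrt_natCast_sq, norm_toLp_sq]
    ring
  intro z
  have hz := hb z.ofLp
  rw [← hfit, ← hfit] at hz
  exact hz

lemma norm_correlation_toEuclideanLin (X : Matrix (Fin n) (Fin p) ℂ) (ε : Fin n → ℂ) (j : Fin p) :
    ‖correlation (toEuclideanLin (((√n : ℝ) : ℂ)⁻¹ • X))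
      (((√n : ℝ) : ℂ)⁻¹ • WithLp.toLp 2 ε) j‖ =
      1 / n * ‖∑ k, (starRingEnd ℂ) (ε k) * X k j‖ := by
  have hinner : ⟪WithLp.toLp 2 ε, toEuclideanLin X (EuclideanSpace.single j 1)⟫_ℂ =
      ∑ k, (starRingEnd ℂ) (ε k) * X k j := by
    rw [PiLp.inner_apply]
    refine sum_congr rfl fun k _ => ?_
    simp [toLpLin_apply, mul_comm]
  rw [correlation_apply, norm_inner_symm, map_smul, LinearMap.smul_apply, inner_smul_left,
    inner_smul_right, hinner, norm_mul, norm_mul, RCLike.norm_conj, ← mul_assoc, ← sq,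
    norm_inv_sqrt_natCast_sq]

lemma IsLasso.sqrt_l2sq_sub_le {β b : Fin p → ℂ} {ε : Fin n → ℂ} {lam t δ δt : ℝ}
    (hb : IsLasso X (X *ᵥ β + ε) lam b) (hlam : 0 < lam)
    (hX : RIP (((√n : ℝ) : ℂ)⁻¹ • X) t δt) (hδ : δ ∈ Set.Ico (-1) 1) (hδt : δt ≤ δ)
    (ht : (13 * (1 + δ) / (1 - δ) + 1) * sparseCount β ≤ t)
    (hε : ∀ j, 2 / n * ‖∑ k, (starRingEnd ℂ) (ε k) * X k j‖ ≤ lam / 2) :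
    √(l2sq (b - β)) ≤ 5 / 4 * lam * √(sparseCount β) / (1 - δt) := by
  have hnum : 0 ≤ 1 + δ := by linarith [hδ.1]
  have hgap : 0 < 1 - δ := sub_pos.2 hδ.2
  have hpos : 0 < 1 - δt := by linarith
  have horder : (13 * (√(1 + δ) / √(1 - δt)) ^ 2 + 1) * sparseCount β ≤ t := by
    rw [div_pow, Real.sq_sqrt hnum, Real.sq_sqrt hpos.le, ← mul_div_assoc]
    exact le_trans (by gcongr) ht
  have hdata : ((√n : ℝ) : ℂ)⁻¹ • WithLp.toLp 2 (X *ᵥ β + ε) =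
      toEuclideanLin (((√n : ℝ) : ℂ)⁻¹ • X) (WithLp.toLp 2 β) +
        ((√n : ℝ) : ℂ)⁻¹ • WithLp.toLp 2 ε := by
    rw [map_smul, LinearMap.smul_apply, toLpLin_toLp, toLin'_apply, WithLp.toLp_add, smul_add]
  have hnoise (j : Fin p) : ‖correlation (toEuclideanLin (((√n : ℝ) : ℂ)⁻¹ • X))
      (((√n : ℝ) : ℂ)⁻¹ • WithLp.toLp 2 ε) j‖ ≤ lam / 4 :=
    calc _ = 2 / n * ‖∑ k, (starRingEnd ℂ) (ε k) * X k j‖ / 2 := by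
          rw [norm_correlation_toEuclideanLin]
          ring
      _ ≤ lam / 4 := by linarith [hε j]
  have hmin := hb.isLassoMinimizer
  rw [hdata] at hmin
  have hbound := lasso_oracle_l2_general (S := univ.filter fun i => β i ≠ 0)
    (hX.sparseBounds hδt) (Real.sqrt_pos.2 hpos) horder (fun i hi => by simpa using hi)
    hlam hnoise hmin
  rwa [Real.sq_sqrt hpos.le, ← WithLp.toLp_sub, ← sqrt_l2sq] at hbound

end Matrix

end SparseRegression

lemma five_halves_mul_two_add_sqrt_le {x : ℝ} (hx : 1 ≤ x) :
    5 / 2 * (2 + √(10 * x)) ≤ √640 * √x := by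
  have h640 : √640 = 8 * √10 := by
    rw [show (640 : ℝ) = 8 ^ 2 * 10 by norm_num, Real.sqrt_mul (by norm_num),
      Real.sqrt_sq (by norm_num)]
  have hone : 1 ≤ √10 * √x :=
    one_le_mul_of_one_le_of_one_le (Real.one_le_sqrt.2 (by norm_num)) (Real.one_le_sqrt.2 hx)
  rw [Real.sqrt_mul (by norm_num), h640]
  linarith

lemma one_le_log_natCast {p : ℕ} (hp : 3 ≤ p) : 1 ≤ Real.log p := by
  have hp' : (3 : ℝ) ≤ p := by exact_mod_cast hp
  rw [Real.le_log_iff_exp_le (by linarith)]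
  linarith [Real.exp_one_lt_d9]

/-- Let `β⁰ ∈ ℂᵖ` be `s₀`-sparse, `y = Xβ⁰ + ε`, `δ ∈ (0,1)`. Suppose
`X/√n` satisfies the RIP of order `t := (36(1+δ)/(1-δ)+1)s₀` with constant `δₜ < δ`, and
`max_j (2/n)|⟨ε, Xⱼ⟩| ≤ λ₀` with `λ₀ = (σ√K/√n)(2+√(10 log p))`. Let `β̂` be a complex
LASSO estimator with regularization parameter `λ = 2λ₀`, and assume `p ≥ 3`. Then
`‖β̂-β⁰‖₂ ≤ C_δ^σ √K √(s₀ log p)/√n` with `C_δ^σ = √640 σ/(1-δₜ)`. -/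
theorem lasso_oracle_l2
    {n p : ℕ} (hn : 0 < n) (hp : 3 ≤ p)
    (X : Matrix (Fin n) (Fin p) ℂ) (β0 : Fin p → ℂ) (ε y : Fin n → ℂ)
    (s0 : ℕ) (hs0 : sparseCount β0 ≤ s0)
    (hy : y = X.mulVec β0 + ε)
    (δ δt : ℝ) (hδ : δ ∈ Set.Ioo (0 : ℝ) 1) (hδt : δt < δ)
    (hRIP : RIP ((((Real.sqrt n : ℝ) : ℂ))⁻¹ • X)
      ((36 * (1 + δ) / (1 - δ) + 1) * s0) δt)
    (K σ : ℝ) (hK : 1 ≤ K) (hσ : 0 < σ)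
    (lam0 : ℝ)
    (hlam0 : lam0 = σ * Real.sqrt K / Real.sqrt n * (2 + Real.sqrt (10 * Real.log p)))
    (hnoise : ∀ j : Fin p, 2 / (n : ℝ) * ‖∑ k, (starRingEnd ℂ) (ε k) * X k j‖ ≤ lam0)
    (lam : ℝ) (hlam : lam = 2 * lam0)
    (βhat : Fin p → ℂ) (hβhat : IsLasso X y lam βhat) :
    Real.sqrt (l2sq (βhat - β0)) ≤
      Real.sqrt 640 * σ / (1 - δt) * Real.sqrt K *
        (Real.sqrt (s0 * Real.log p) / Real.sqrt n) := by
  obtain rfl := hy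
  have hlam_pos : 0 < lam := by
    have := Real.sqrt_pos.2 (zero_lt_one.trans_le hK)
    rw [hlam, hlam0]
    positivity
  have hgap : 0 < 1 - δ := sub_pos.2 hδ.2
  have hgap_t : 0 < 1 - δt := by linarith
  have hnum : 0 ≤ 1 + δ := by linarith [hδ.1]
  have horder : (13 * (1 + δ) / (1 - δ) + 1) * sparseCount β0 ≤
      (36 * (1 + δ) / (1 - δ) + 1) * s0 := by gcongr; norm_num
  calc √(l2sq (βhat - β0)) ≤ 5 / 4 * lam * √(sparseCount β0) / (1 - δt) :=
      hβhat.sqrt_l2sq_sub_le hlam_pos hRIP ⟨by linarith, hδ.2⟩ hδt.le horder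
        fun j => by linarith [hnoise j]
    _ ≤ 5 / 4 * lam * √s0 / (1 - δt) := by gcongr
    _ = σ * √K / √n * √s0 / (1 - δt) * (5 / 2 * (2 + √(10 * Real.log p))) := by
      rw [hlam, hlam0]
      ring
    _ ≤ σ * √K / √n * √s0 / (1 - δt) * (√640 * √(Real.log p)) := by
      exact mul_le_mul_of_nonneg_left
        (five_halves_mul_two_add_sqrt_le (one_le_log_natCast hp)) (by positivity)
    _ = √640 * σ / (1 - δt) * √K * (√(s0 * Real.log p) / √n) := by
      rw [Real.sqrt_mul (Nat.cast_nonneg _)]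
      ring
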